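/- arXiv:2004.08496 — 2 statements merged into one kernel-verified Lean document; each statement's English description precedes it below -/
import Mathlib

section
/- Let X be a Hausdorff topological space, k and m natural numbers with m ≤ 2k, and f a continuous selection on F_k(X). Suppose there exists n with 1 ≤ n ≤ k such that for every m-element subset Z of X there exist x, y ∈ Z with |{A ∈ [Z]^n : f(A) = x}| ≠ |{A ∈ [Z]^n : f(A) = y}|. Then there exists a continuous selection on [X]^m. -/
/-!
For an `m`-element set `Z`, let `M(Z) ⊆ Z` be the set of points selected by `f` from a maximal
number of `n`-element subsets of `Z`. The counts are not constant on `Z`, so both `M(Z)` and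
`Z \ M(Z)` are nonempty, and since `m ≤ 2k` one of them has at most `k` elements. Put
`h(Z) = f(M(Z))` if `|M(Z)| ≤ k` and `h(Z) = f(Z \ M(Z))` otherwise.

Continuity: if `y : Fin m → X` is close enough to an injective `x : Fin m → X`, then on every
nonempty index set of size at most `k` the selection `f` picks the same index for `y` as for `x`
(`eventually_same_index`). Hence the counts agree at corresponding indices (`selCount_image`), so
`M` of the range of `y` and `M` of the range of `x` come from the same set of indices
(`maxPart_image`), and `h` picks the same index for both.
-/

/-- `f` is a selection on `[X]^n`: it assigns to each `n`-element subset one of its points. -/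
def SelOn {X : Type*} (n : ℕ) (f : Finset X → X) : Prop :=
  ∀ s : Finset X, s.card = n → f s ∈ s

/-- `f` is a continuous selection on `[X]^n`. -/
def ContSelOn {X : Type*} [TopologicalSpace X] [DecidableEq X] (n : ℕ)
    (f : Finset X → X) : Prop :=
  SelOn n f ∧
  ∀ x : Fin n → X, Function.Injective x →
    ∃ U : Fin n → Set X,
      (∀ i, IsOpen (U i)) ∧ (∀ i, x i ∈ U i) ∧
      Pairwise (fun i j => Disjoint (U i) (U j)) ∧
      ∃ j : Fin n, ∀ y : Fin n → X, (∀ i, y i ∈ U i) →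
        f (Finset.image y Finset.univ) ∈ U j

/-- `f` is a selection on `F_n(X)`, the nonempty subsets of size at most `n`. -/
def SelOnLE {X : Type*} (n : ℕ) (f : Finset X → X) : Prop :=
  ∀ s : Finset X, s.Nonempty → s.card ≤ n → f s ∈ s

/-- `f` is a continuous selection on `F_n(X)`. -/
def ContSelOnLE {X : Type*} [TopologicalSpace X] (n : ℕ) (f : Finset X → X) : Prop :=
  SelOnLE n f ∧
  ∀ s : Finset X, s.Nonempty → s.card ≤ n →
    ∀ V : Set X, IsOpen V → f s ∈ V →
      ∃ U : X → Set X,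
        (∀ x ∈ s, IsOpen (U x)) ∧ (∀ x ∈ s, x ∈ U x) ∧
        ((s : Set X).Pairwise fun x y => Disjoint (U x) (U y)) ∧
        ∀ B : Finset X, B.Nonempty → B.card ≤ n →
          ((B : Set X) ⊆ ⋃ x ∈ s, U x) → (∀ x ∈ s, ∃ b ∈ B, b ∈ U x) → f B ∈ V

section

variable {X : Type*} [DecidableEq X]

/-- The number of `n`-element subsets of `Z` from which `f` selects `z`. -/
def selCount (f : Finset X → X) (n : ℕ) (Z : Finset X) (z : X) : ℕ :=
  ((Z.powersetCard n).filter fun A => f A = z).card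

/-- The points of `Z` selected by `f` from a maximal number of `n`-element subsets of `Z`. -/
def maxPart (f : Finset X → X) (n : ℕ) (Z : Finset X) : Finset X :=
  Z.filter fun z => ∀ w ∈ Z, selCount f n Z w ≤ selCount f n Z z

/-- The selection on `[X]^m` derived from `f`: apply `f` to `maxPart f n Z`, or to its complement
in `Z` if `maxPart f n Z` has more than `k` elements. -/
def derivedSel (f : Finset X → X) (k n : ℕ) (Z : Finset X) : X :=
  if (maxPart f n Z).card ≤ k then f (maxPart f n Z) else f (Z \ maxPart f n Z)

theorem ncard_eq_selCount (f : Finset X → X) (n : ℕ) (Z : Finset X) (z : X) :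
    Set.ncard {A : Finset X | A ⊆ Z ∧ A.card = n ∧ f A = z} = selCount f n Z z := by
  rw [selCount, ← Set.ncard_coe_finset]
  congr 1
  ext A
  simp [Finset.mem_powersetCard, and_assoc]

theorem maxPart_subset (f : Finset X → X) (n : ℕ) (Z : Finset X) : maxPart f n Z ⊆ Z :=
  Finset.filter_subset _ _

theorem maxPart_nonempty (f : Finset X → X) (n : ℕ) {Z : Finset X} (hZ : Z.Nonempty) :
    (maxPart f n Z).Nonempty := by
  obtain ⟨z, hz, h⟩ := Finset.exists_max_image Z (selCount f n Z) hZ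
  exact ⟨z, Finset.mem_filter.2 ⟨hz, h⟩⟩

theorem sdiff_maxPart_nonempty {f : Finset X → X} {n : ℕ} {Z : Finset X} {x y : X}
    (hx : x ∈ Z) (hy : y ∈ Z) (hne : selCount f n Z x ≠ selCount f n Z y) :
    (Z \ maxPart f n Z).Nonempty := by
  by_contra h
  rw [Finset.not_nonempty_iff_eq_empty, Finset.sdiff_eq_empty_iff_subset] at h
  exact hne (le_antisymm ((Finset.mem_filter.1 (h hy)).2 x hx)
    ((Finset.mem_filter.1 (h hx)).2 y hy))

theorem selCount_image (f : Finset X → X) (n : ℕ) {m : ℕ} {y : Fin m → X}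
    (hy : Function.Injective y) (j : Fin m) :
    selCount f n (Finset.univ.image y) (y j) =
      ((Finset.univ.powersetCard n).filter fun I : Finset (Fin m) => f (I.image y) = y j).card := by
  rw [selCount, ← Finset.card_image_of_injective _ (Finset.image_injective hy)]
  congr 1
  ext A
  simp only [Finset.mem_filter, Finset.mem_powersetCard, Finset.mem_image]
  constructor
  · rintro ⟨⟨hA, hc⟩, hfA⟩
    obtain ⟨I, -, rfl⟩ := Finset.subset_image_iff.1 hA
    exact ⟨I, ⟨⟨Finset.subset_univ _, by rwa [Finset.card_image_of_injective _ hy] at hc⟩, hfA⟩,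
      rfl⟩
  · rintro ⟨I, ⟨⟨-, hc⟩, hfA⟩, rfl⟩
    exact ⟨⟨Finset.image_subset_image (Finset.subset_univ _),
      by rwa [Finset.card_image_of_injective _ hy]⟩, hfA⟩

theorem maxPart_image (f : Finset X → X) (n : ℕ) {m : ℕ} {y : Fin m → X} (c : Fin m → ℕ)
    (hc : ∀ j, selCount f n (Finset.univ.image y) (y j) = c j) :
    maxPart f n (Finset.univ.image y) =
      (Finset.univ.filter fun j => ∀ i, c i ≤ c j).image y := by
  ext z
  simp only [maxPart, Finset.mem_filter, Finset.mem_image, Finset.mem_univ, true_and]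
  constructor
  · rintro ⟨⟨j, rfl⟩, h⟩
    exact ⟨j, fun i => by simpa only [hc] using h (y i) ⟨i, rfl⟩, rfl⟩
  · rintro ⟨j, h, rfl⟩
    refine ⟨⟨j, rfl⟩, ?_⟩
    rintro _ ⟨i, rfl⟩
    simpa only [hc] using h i

/-- On each nonempty index set of size at most `k`, the index picked by `f` is locally constant:
continuity puts `f (I.image y)` in the neighbourhood `D j` of `x j = f (I.image x)`, and `y j` is
the only point of `I.image y` lying there. -/
theorem eventually_same_index [TopologicalSpace X] {k m : ℕ} {f : Finset X → X}
    (hf : ContSelOnLE k f) {x : Fin m → X} {D : Fin m → Set X}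
    (hDo : ∀ i, IsOpen (D i)) (hxD : ∀ i, x i ∈ D i)
    (hD : Pairwise fun i j => Disjoint (D i) (D j)) (I : Finset (Fin m)) (hI : I.Nonempty)
    (hIk : I.card ≤ k) :
    ∃ j ∈ I, f (I.image x) = x j ∧ ∀ᶠ y in nhds x, f (I.image y) = y j := by
  have hmem := hf.1 (I.image x) (hI.image x) (Finset.card_image_le.trans hIk)
  obtain ⟨j, hj, hxj⟩ := Finset.mem_image.1 hmem
  refine ⟨j, hj, hxj.symm, ?_⟩
  obtain ⟨U, hUo, hxU, -, hU⟩ := hf.2 (I.image x) (hI.image x) (Finset.card_image_le.trans hIk)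
    (D j) (hDo j) (hxj ▸ hxD j)
  have h1 : ∀ᶠ y in nhds x, ∀ i ∈ I, y i ∈ U (x i) := by
    rw [Filter.eventually_all_finset]
    intro i hi
    have hi' := Finset.mem_image_of_mem x hi
    exact (continuous_apply i).continuousAt.eventually ((hUo _ hi').mem_nhds (hxU _ hi'))
  have h2 : ∀ᶠ y in nhds x, ∀ i, y i ∈ D i :=
    Filter.eventually_all.2 fun i =>
      (continuous_apply i).continuousAt.eventually ((hDo i).mem_nhds (hxD i))
  filter_upwards [h1, h2] with y hy1 hy2
  have hfV : f (I.image y) ∈ D j := by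
    refine hU _ (hI.image y) (Finset.card_image_le.trans hIk) ?_ ?_
    · intro b hb
      obtain ⟨i, hi, rfl⟩ := Finset.mem_image.1 (Finset.mem_coe.1 hb)
      exact Set.mem_biUnion (Finset.mem_image_of_mem x hi) (hy1 i hi)
    · intro a ha
      obtain ⟨i, hi, rfl⟩ := Finset.mem_image.1 ha
      exact ⟨y i, Finset.mem_image_of_mem y hi, hy1 i hi⟩
  obtain ⟨i, hi, hyi⟩ :=
    Finset.mem_image.1 (hf.1 (I.image y) (hI.image y) (Finset.card_image_le.trans hIk))
  rw [← hyi] at hfV ⊢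
  by_contra hne
  have hij : i ≠ j := fun h => hne (h ▸ rfl)
  exact Set.disjoint_left.1 (hD hij) (hy2 i) hfV

end

/-- If `m ≤ 2k`, `f` is a continuous selection on `F_k(X)`, and for some
`1 ≤ n ≤ k` every `m`-element subset `Z` of `X` has two points with different numbers of
`n`-element subsets of `Z` selecting them via `f`, then `X` admits a continuous
selection on `[X]^m`. -/
theorem statement10 {X : Type*} [TopologicalSpace X] [T2Space X] [DecidableEq X]
    (k m : ℕ) (hmk : m ≤ 2 * k)
    (f : Finset X → X) (hf : ContSelOnLE k f)
    (hex : ∃ n : ℕ, 1 ≤ n ∧ n ≤ k ∧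
      ∀ Z : Finset X, Z.card = m →
        ∃ x ∈ Z, ∃ y ∈ Z,
          Set.ncard {A : Finset X | A ⊆ Z ∧ A.card = n ∧ f A = x} ≠
          Set.ncard {A : Finset X | A ⊆ Z ∧ A.card = n ∧ f A = y}) :
    ∃ h : Finset X → X, ContSelOn m h := by
  obtain ⟨n, hn1, hnk, hZ⟩ := hex
  simp only [ncard_eq_selCount] at hZ
  have hne : ∀ Z : Finset X, Z.card = m →
      (maxPart f n Z).Nonempty ∧ (Z \ maxPart f n Z).Nonempty := by
    intro Z hc
    obtain ⟨x, hx, y, hy, hxy⟩ := hZ Z hc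
    exact ⟨maxPart_nonempty f n ⟨x, hx⟩, sdiff_maxPart_nonempty hx hy hxy⟩
  have hcard : ∀ Z : Finset X, Z.card = m → ¬ (maxPart f n Z).card ≤ k →
      (Z \ maxPart f n Z).card ≤ k := by
    intro Z hc hk
    have := Finset.card_sdiff_add_card_eq_card (maxPart_subset f n Z)
    omega
  refine ⟨derivedSel f k n, ?_, ?_⟩
  · intro Z hc
    unfold derivedSel
    split_ifs with hk
    · exact maxPart_subset f n Z (hf.1 _ (hne Z hc).1 hk)
    · exact Finset.sdiff_subset (hf.1 _ (hne Z hc).2 (hcard Z hc hk))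
  intro x hx
  obtain ⟨S, hS, hSdisj⟩ := (Set.finite_range x).t2_separation
  have hDdisj : Pairwise fun i j => Disjoint (S (x i)) (S (x j)) := fun i j hij =>
    hSdisj (Set.mem_range_self i) (Set.mem_range_self j) (hx.ne hij)
  have hxD : ∀ i, x i ∈ S (x i) := fun i => (hS (x i)).1
  have hDo : ∀ i, IsOpen (S (x i)) := fun i => (hS (x i)).2
  have : Nonempty (Fin m) := by
    obtain ⟨z, hz⟩ := (hne (Finset.univ.image x) (by
      rw [Finset.card_image_of_injective _ hx, Finset.card_univ, Fintype.card_fin])).1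
    obtain ⟨i, -⟩ := Finset.mem_image.1 (maxPart_subset f n _ hz)
    exact ⟨i⟩
  have hp := eventually_same_index hf hDo hxD hDdisj
  -- `p I` is the index picked by `f` on the index set `I`, for all tuples near `x`.
  choose! p _ _ hpy using hp
  have hall : ∀ᶠ y in nhds x, (∀ i, y i ∈ S (x i)) ∧
      ∀ I : Finset (Fin m), I.Nonempty → I.card ≤ k → f (I.image y) = y (p I) := by
    refine Filter.Eventually.and (Filter.eventually_all.2 fun i =>
      (continuous_apply i).continuousAt.eventually ((hDo i).mem_nhds (hxD i))) ?_
    refine Filter.eventually_all.2 fun I => ?_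
    by_cases hI : I.Nonempty ∧ I.card ≤ k
    · filter_upwards [hpy I hI.1 hI.2] with y hy _ _ using hy
    · exact Filter.Eventually.of_forall fun y h1 h2 => absurd ⟨h1, h2⟩ hI
  obtain ⟨N, hN, hNo, hxN⟩ := eventually_nhds_iff.1 hall
  obtain ⟨U, hU, hUN⟩ := isOpen_pi_iff'.1 hNo x hxN
  -- `c j` counts the `n`-element index sets on which the index `j` is picked, and `J` is the set
  -- of indices maximizing this count; neither depends on the tuple near `x`.
  let c : Fin m → ℕ := fun j =>
    ((Finset.univ.powersetCard n).filter fun I : Finset (Fin m) => p I = j).card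
  let J : Finset (Fin m) := Finset.univ.filter fun j => ∀ i, c i ≤ c j
  have key : ∀ y : Fin m → X, (∀ i, y i ∈ U i) →
      derivedSel f k n (Finset.univ.image y) = y (if J.card ≤ k then p J else p Jᶜ) := by
    intro y hyU
    obtain ⟨hyD, hyp⟩ := hN y (hUN fun i _ => hyU i)
    have hyinj : Function.Injective y := by
      intro i j hij
      by_contra hne'
      exact Set.disjoint_left.1 (hDdisj hne') (hyD i) (hij ▸ hyD j)
    have hc : ∀ j, selCount f n (Finset.univ.image y) (y j) = c j := by
      intro j
      rw [selCount_image f n hyinj]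
      refine congrArg Finset.card (Finset.filter_congr fun I hI => ?_)
      have hIn := (Finset.mem_powersetCard.1 hI).2
      rw [hyp I (Finset.card_pos.1 (by omega)) (by omega), hyinj.eq_iff]
    have hM : maxPart f n (Finset.univ.image y) = J.image y := maxPart_image f n c hc
    have hcomp : Finset.univ.image y \ J.image y = Jᶜ.image y := by
      rw [← Finset.image_sdiff _ _ hyinj, Finset.compl_eq_univ_sdiff]
    have hZm : (Finset.univ.image y).card = m := by
      rw [Finset.card_image_of_injective _ hyinj, Finset.card_univ, Fintype.card_fin]
    have h1 := hne _ hZm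
    have h2 := hcard _ hZm
    rw [hM, hcomp, Finset.image_nonempty, Finset.image_nonempty] at h1
    rw [hM, hcomp, Finset.card_image_of_injective _ hyinj,
      Finset.card_image_of_injective _ hyinj] at h2
    rw [derivedSel, hM, hcomp, Finset.card_image_of_injective _ hyinj]
    split_ifs with hk
    · exact hyp J h1.1 hk
    · exact hyp Jᶜ h1.2 (h2 hk)
  refine ⟨fun i => U i ∩ S (x i), fun i => (hU i).1.inter (hDo i), fun i => ⟨(hU i).2, hxD i⟩,
    fun i j hij => (hDdisj hij).mono Set.inter_subset_right Set.inter_subset_right,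
    if J.card ≤ k then p J else p Jᶜ, fun y hy => ?_⟩
  rw [key y fun i => (hy i).1]
  exact hy _
end

section
/- Let X be a Hausdorff topological space, n ≥ 2 an even natural number, and f a continuous selection on F_n(X). Then there exists a continuous selection on [X]^{n+1} if and only if there exists a continuous selection on 𝒫(Reg_{n+1}); that is, a function h : 𝒫(Reg_{n+1}) → X with h(s) ∈ s for all s ∈ 𝒫(Reg_{n+1}), such that for every s = {x_0,…,x_n} ∈ 𝒫(Reg_{n+1}) there exist pairwise disjoint open sets U_0,…,U_n with x_i ∈ U_i for each i and an index j ≤ n such that for every choice of points y_i ∈ U_i (i = 0,…,n) the set {y_0,…,y_n} belongs to 𝒫(Reg_{n+1}) and h({y_0,…,y_n}) ∈ U_j. -/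
/-- `𝒫(Reg_m)`: the `m`-element subsets `s` of `X` such that the number of `2`-element
subsets of `s` that `f` sends to `x` is the same for all `x ∈ s`. -/
def PReg {X : Type*} (m : ℕ) (f : Finset X → X) : Set (Finset X) :=
  {s | s.card = m ∧ ∀ x ∈ s, ∀ y ∈ s,
    Set.ncard {A : Finset X | A ⊆ s ∧ A.card = 2 ∧ f A = x} =
    Set.ncard {A : Finset X | A ⊆ s ∧ A.card = 2 ∧ f A = y}}

open Topology Filter

/-- The score of `x` in `s`: the number of pairs in `s` that `f` sends to `x`. -/
noncomputable def score {X : Type*} (f : Finset X → X) (s : Finset X) (x : X) : ℕ :=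
  Set.ncard {A : Finset X | A ⊆ s ∧ A.card = 2 ∧ f A = x}

open Classical in
/-- The points of `s` of maximal score. -/
noncomputable def topSet {X : Type*} (f : Finset X → X) (s : Finset X) : Finset X :=
  s.filter fun x => ∀ z ∈ s, score f s z ≤ score f s x

/-- The tuples `x` and `y` are injective, and `f` takes values at the same indices on corresponding
nonempty subsets of size at most `n` of their ranges. -/
def SamePattern {X : Type*} [DecidableEq X] (n : ℕ) (f : Finset X → X)
    {ι : Type*} (x y : ι → X) : Prop :=
  Function.Injective x ∧ Function.Injective y ∧
    ∀ B : Finset ι, B.Nonempty → B.card ≤ n → ∀ i,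
      f (B.image y) = y i ↔ f (B.image x) = x i

theorem injective_of_mem_box {X ι : Type*} {y : ι → X} {W : ι → Set X}
    (hd : Pairwise (fun i j => Disjoint (W i) (W j))) (hy : ∀ i, y i ∈ W i) :
    Function.Injective y := by
  intro i j hij
  by_contra hne
  exact Set.disjoint_left.1 (hd hne) (hy i) (hij ▸ hy j)

/-- A point of the range of `y` lying in the `j`-th side of a disjoint box around `y` is `y j`. -/
theorem eq_of_mem_box {X ι : Type*} {y : ι → X} {W : ι → Set X}
    (hd : Pairwise (fun i j => Disjoint (W i) (W j))) (hy : ∀ i, y i ∈ W i) {p : X} {j : ι}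
    (hp : p ∈ W j) (hr : ∃ k, y k = p) : p = y j := by
  obtain ⟨k, rfl⟩ := hr
  by_cases hkj : k = j
  · rw [hkj]
  · exact absurd hp (Set.disjoint_left.1 (hd hkj) (hy k))

section Topological

variable {X ι : Type*} [TopologicalSpace X] [Finite ι]

theorem exists_disjoint_box [T2Space X] {x : ι → X} (hx : Function.Injective x) :
    ∃ W : ι → Set X, (∀ i, IsOpen (W i)) ∧ (∀ i, x i ∈ W i) ∧
      Pairwise (fun i j => Disjoint (W i) (W j)) := by
  obtain ⟨V, hV, hd⟩ := (Set.finite_range x).t2_separation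
  refine ⟨fun i => V (x i), fun i => (hV _).2, fun i => (hV _).1, fun i j hij => ?_⟩
  exact hd ⟨i, rfl⟩ ⟨j, rfl⟩ (hx.ne hij)

theorem eventually_mem_box {x : ι → X} {W : ι → Set X} (ho : ∀ i, IsOpen (W i))
    (hm : ∀ i, x i ∈ W i) : ∀ᶠ y in 𝓝 x, ∀ i, y i ∈ W i :=
  eventually_all.2 fun i => (continuous_apply i).continuousAt ((ho i).mem_nhds (hm i))

/-- A property holding near an injective tuple holds on a box with pairwise disjoint sides. -/
theorem exists_box_of_eventually [T2Space X] {x : ι → X} (hx : Function.Injective x)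
    {P : (ι → X) → Prop} (hP : ∀ᶠ y in 𝓝 x, P y) :
    ∃ U : ι → Set X, (∀ i, IsOpen (U i)) ∧ (∀ i, x i ∈ U i) ∧
      Pairwise (fun i j => Disjoint (U i) (U j)) ∧ ∀ y : ι → X, (∀ i, y i ∈ U i) → P y := by
  obtain ⟨W, hWo, hWm, hWd⟩ := exists_disjoint_box hx
  rw [nhds_pi, Filter.Eventually, Filter.mem_pi'] at hP
  obtain ⟨I, t, ht, hsub⟩ := hP
  refine ⟨fun i => W i ∩ interior (t i), fun i => (hWo i).inter isOpen_interior,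
    fun i => ⟨hWm i, mem_interior_iff_mem_nhds.2 (ht i)⟩, fun i j hij =>
      (hWd hij).mono Set.inter_subset_left Set.inter_subset_left, fun y hy => ?_⟩
  exact hsub fun i _ => interior_subset (hy i).2

/-- Continuity of `f` at `x(B)`, read in indices: the index selected by `f` is locally constant. -/
theorem eventually_apply_image_eq [T2Space X] [DecidableEq X] {n : ℕ} {f : Finset X → X}
    (hf : ContSelOnLE n f) {x : ι → X} (hx : Function.Injective x) {B : Finset ι}
    (hB : B.Nonempty) (hc : B.card ≤ n) {i : ι} (hi : f (B.image x) = x i) :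
    ∀ᶠ y in 𝓝 x, f (B.image y) = y i := by
  obtain ⟨W, hWo, hWm, hWd⟩ := exists_disjoint_box hx
  obtain ⟨U, hUo, hUm, -, hU⟩ := hf.2 (B.image x) (hB.image x) (Finset.card_image_le.trans hc)
    (W i) (hWo i) (hi ▸ hWm i)
  have h2 : ∀ᶠ y in 𝓝 x, ∀ j, j ∈ B → y j ∈ U (x j) := by
    refine eventually_all.2 fun j => ?_
    by_cases hj : j ∈ B
    · have hj' := Finset.mem_image_of_mem x hj
      filter_upwards [(continuous_apply j).continuousAt
        ((hUo _ hj').mem_nhds (hUm _ hj'))] with y hy _ using hy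
    · exact Eventually.of_forall fun y h => absurd h hj
  filter_upwards [eventually_mem_box hWo hWm, h2] with y hy1 hy2
  have hcy : (B.image y).card ≤ n := Finset.card_image_le.trans hc
  refine eq_of_mem_box hWd hy1 (hU _ (hB.image y) hcy ?_ ?_) ?_
  · intro p hp
    obtain ⟨j, hj, rfl⟩ := Finset.mem_image.1 (Finset.mem_coe.1 hp)
    exact Set.mem_biUnion (Finset.mem_coe.2 (Finset.mem_image_of_mem x hj)) (hy2 j hj)
  · intro p hp
    obtain ⟨j, hj, rfl⟩ := Finset.mem_image.1 hp
    exact ⟨y j, Finset.mem_image_of_mem y hj, hy2 j hj⟩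
  · obtain ⟨k, -, hk⟩ := Finset.mem_image.1 (hf.1 _ (hB.image y) hcy)
    exact ⟨k, hk⟩

theorem eventually_samePattern [T2Space X] [DecidableEq X] {n : ℕ} {f : Finset X → X}
    (hf : ContSelOnLE n f) {x : ι → X} (hx : Function.Injective x) :
    ∀ᶠ y in 𝓝 x, SamePattern n f x y := by
  obtain ⟨W, hWo, hWm, hWd⟩ := exists_disjoint_box hx
  have hpat : ∀ᶠ y in 𝓝 x, ∀ B : Finset ι, B.Nonempty → B.card ≤ n →
      ∃ i, f (B.image x) = x i ∧ f (B.image y) = y i := by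
    refine eventually_all.2 fun B => ?_
    by_cases hB : B.Nonempty ∧ B.card ≤ n
    · obtain ⟨i, -, hi⟩ := Finset.mem_image.1
        (hf.1 _ (hB.1.image x) (Finset.card_image_le.trans hB.2))
      filter_upwards [eventually_apply_image_eq hf hx hB.1 hB.2 hi.symm] with y hy _ _
      exact ⟨i, hi.symm, hy⟩
    · exact Eventually.of_forall fun y h1 h2 => absurd ⟨h1, h2⟩ hB
  filter_upwards [eventually_mem_box hWo hWm, hpat] with y hy1 hy2
  have hy := injective_of_mem_box hWd hy1
  refine ⟨hx, hy, fun B hB hc i => ?_⟩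
  obtain ⟨k, hk1, hk2⟩ := hy2 B hB hc
  rw [hk1, hk2, hx.eq_iff, hy.eq_iff]

end Topological

section Pattern

variable {X ι : Type*} [DecidableEq X] [Fintype ι] {n : ℕ} {f : Finset X → X}

theorem score_image {y : ι → X} (hy : Function.Injective y) (p : X) :
    score f (Finset.univ.image y) p =
      Set.ncard {B : Finset ι | B.card = 2 ∧ f (B.image y) = p} := by
  rw [score, ← Set.ncard_image_of_injective _ (Finset.image_injective hy)]
  congr 1
  ext A
  constructor
  · rintro ⟨hA, hc, hp⟩
    obtain ⟨B, -, rfl⟩ := Finset.subset_image_iff.1 hA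
    rw [Finset.card_image_of_injective _ hy] at hc
    exact ⟨B, ⟨hc, hp⟩, rfl⟩
  · rintro ⟨B, ⟨hc, hp⟩, rfl⟩
    exact ⟨Finset.image_subset_image (Finset.subset_univ _),
      by rwa [Finset.card_image_of_injective _ hy], hp⟩

theorem SamePattern.score_eq {x y : ι → X} (h : SamePattern n f x y) (hn : 2 ≤ n) (i : ι) :
    score f (Finset.univ.image y) (y i) = score f (Finset.univ.image x) (x i) := by
  rw [score_image h.2.1, score_image h.1]
  congr 1
  ext B
  simp only [Set.mem_ofPred_eq]
  refine and_congr_right fun hc => h.2.2 B (Finset.card_pos.1 (by omega)) (by omega) i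

theorem SamePattern.mem_PReg_iff {x y : ι → X} (h : SamePattern n f x y) (hn : 2 ≤ n) {m : ℕ} :
    Finset.univ.image y ∈ PReg m f ↔ Finset.univ.image x ∈ PReg m f := by
  have key : ∀ z : ι → X, Function.Injective z → (Finset.univ.image z ∈ PReg m f ↔
      Fintype.card ι = m ∧ ∀ i j, score f (Finset.univ.image z) (z i) =
        score f (Finset.univ.image z) (z j)) := by
    intro z hz
    simp only [PReg, Set.mem_ofPred_eq, Finset.card_image_of_injective _ hz, Finset.card_univ,
      Finset.forall_mem_image, Finset.mem_univ, true_implies, score]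
  rw [key y h.2.1, key x h.1]
  simp only [h.score_eq hn]

theorem topSet_image (y : ι → X) {I : Finset ι}
    (hI : ∀ i, i ∈ I ↔ ∀ j, score f (Finset.univ.image y) (y j) ≤
      score f (Finset.univ.image y) (y i)) :
    topSet f (Finset.univ.image y) = I.image y := by
  ext p
  simp only [topSet, Finset.mem_filter, Finset.mem_image, Finset.mem_univ, true_and, hI]
  constructor
  · rintro ⟨⟨i, rfl⟩, hi⟩
    exact ⟨i, fun j => hi _ ⟨j, rfl⟩, rfl⟩
  · rintro ⟨i, hi, rfl⟩
    refine ⟨⟨i, rfl⟩, ?_⟩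
    rintro _ ⟨j, rfl⟩
    exact hi j

end Pattern

theorem topSet_subset {X : Type*} (f : Finset X → X) (s : Finset X) : topSet f s ⊆ s :=
  Finset.filter_subset _ _

theorem topSet_nonempty {X : Type*} (f : Finset X → X) {s : Finset X} (hs : s.Nonempty) :
    (topSet f s).Nonempty := by
  obtain ⟨x, hx, hmax⟩ := Finset.exists_max_image s (score f s) hs
  exact ⟨x, by simp [topSet, hx]; exact hmax⟩

/-- On a non-regular set some point has less than maximal score, so the top set is proper. -/
theorem card_topSet_le {X : Type*} {f : Finset X → X} {n : ℕ} {s : Finset X}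
    (hs : s.card = n + 1) (hr : s ∉ PReg (n + 1) f) : (topSet f s).card ≤ n := by
  have hne : topSet f s ≠ s := by
    intro he
    refine hr ⟨hs, fun x hx y hy => ?_⟩
    have hmax : ∀ x ∈ s, ∀ z ∈ s, score f s z ≤ score f s x := by
      intro x hx
      rw [← he] at hx
      exact (Finset.mem_filter.1 hx).2
    exact le_antisymm (hmax y hy x hx) (hmax x hx y hy)
  have := Finset.card_lt_card ((topSet_subset f s).ssubset_of_ne hne)
  omega

/-- Let `n ≥ 2` be even and `f` a continuous selection on `F_n(X)`. Then
`X` admits a continuous selection on `[X]^{n+1}` iff there is a continuous selection on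
`𝒫(Reg_{n+1})`. -/
theorem statement13 {X : Type*} [TopologicalSpace X] [T2Space X] [DecidableEq X]
    (n : ℕ) (hn : 2 ≤ n) (hev : Even n)
    (f : Finset X → X) (hf : ContSelOnLE n f) :
    (∃ h : Finset X → X, ContSelOn (n + 1) h) ↔
    (∃ h : Finset X → X,
      (∀ s ∈ PReg (n + 1) f, h s ∈ s) ∧
      ∀ x : Fin (n + 1) → X, Function.Injective x →
        Finset.image x Finset.univ ∈ PReg (n + 1) f →
        ∃ U : Fin (n + 1) → Set X,
          (∀ i, IsOpen (U i)) ∧ (∀ i, x i ∈ U i) ∧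
          Pairwise (fun i j => Disjoint (U i) (U j)) ∧
          ∃ j : Fin (n + 1), ∀ y : Fin (n + 1) → X, (∀ i, y i ∈ U i) →
            Finset.image y Finset.univ ∈ PReg (n + 1) f ∧
            h (Finset.image y Finset.univ) ∈ U j) := by
  classical
  have hcard : ∀ y : Fin (n + 1) → X, Function.Injective y →
      (Finset.image y Finset.univ).card = n + 1 := fun y hy => by
    rw [Finset.card_image_of_injective _ hy, Finset.card_univ, Fintype.card_fin]
  constructor
  · rintro ⟨h, hsel, hcont⟩
    refine ⟨h, fun s hs => hsel s hs.1, fun x hx hreg => ?_⟩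
    obtain ⟨U, hUo, hUm, hUd, j, hj⟩ := hcont x hx
    have hev : ∀ᶠ y in 𝓝 x, Finset.image y Finset.univ ∈ PReg (n + 1) f ∧
        h (Finset.image y Finset.univ) = y j := by
      filter_upwards [eventually_samePattern hf hx, eventually_mem_box hUo hUm] with y hp hy
      refine ⟨(hp.mem_PReg_iff hn).2 hreg, eq_of_mem_box hUd hy (hj y hy) ?_⟩
      simpa using hsel _ (hcard y hp.2.1)
    obtain ⟨V, hVo, hVm, hVd, hV⟩ := exists_box_of_eventually hx hev
    exact ⟨V, hVo, hVm, hVd, j, fun y hy => ⟨(hV y hy).1, (hV y hy).2 ▸ hy j⟩⟩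
  · rintro ⟨h, hsel, hcont⟩
    refine ⟨fun s => if s ∈ PReg (n + 1) f then h s else f (topSet f s), ?_, fun x hx => ?_⟩
    · intro s hs
      by_cases hr : s ∈ PReg (n + 1) f
      · simpa only [if_pos hr] using hsel s hr
      · simp only [if_neg hr]
        exact topSet_subset f s (hf.1 _ (topSet_nonempty f (Finset.card_pos.1 (by omega)))
          (card_topSet_le hs hr))
    · by_cases hr : Finset.image x Finset.univ ∈ PReg (n + 1) f
      · obtain ⟨U, hUo, hUm, hUd, j, hj⟩ := hcont x hx hr
        refine ⟨U, hUo, hUm, hUd, j, fun y hy => ?_⟩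
        simpa only [if_pos (hj y hy).1] using (hj y hy).2
      · -- The indices of the top vertices are the same for all tuples with the pattern of `x`.
        let I : Finset (Fin (n + 1)) := Finset.univ.filter fun i =>
          ∀ j, score f (Finset.image x Finset.univ) (x j) ≤
            score f (Finset.image x Finset.univ) (x i)
        have htop : ∀ y, SamePattern n f x y →
            topSet f (Finset.image y Finset.univ) = I.image y := fun y hp =>
          topSet_image y fun i => by simp [I, hp.score_eq hn]
        have htopx : topSet f (Finset.image x Finset.univ) = I.image x :=
          topSet_image x fun i => by simp [I]
        have hIne : I.Nonempty := by
          rw [← Finset.image_nonempty (f := x), ← htopx]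
          exact topSet_nonempty f (Finset.univ_nonempty.image x)
        have hIc : I.card ≤ n := by
          rw [← Finset.card_image_of_injective I hx, ← htopx]
          exact card_topSet_le (hcard x hx) hr
        obtain ⟨j, -, hj⟩ := Finset.mem_image.1
          (hf.1 _ (hIne.image x) (Finset.card_image_le.trans hIc))
        obtain ⟨V, hVo, hVm, hVd, hV⟩ :=
          exists_box_of_eventually hx (eventually_samePattern hf hx)
        refine ⟨V, hVo, hVm, hVd, j, fun y hy => ?_⟩
        have hp := hV y hy
        have hry : Finset.image y Finset.univ ∉ PReg (n + 1) f :=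
          fun hmem => hr ((hp.mem_PReg_iff hn).1 hmem)
        simp only [if_neg hry]
        rw [htop y hp, (hp.2.2 I hIne hIc j).2 hj.symm]
        exact hy j
end
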